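/- arXiv:1507.02341 — 2 statements merged into one kernel-verified Lean document; each statement's English description precedes it below -/
import Mathlib

section
/- Let T be a tree on n ≥ 3 vertices, and for 0 ≤ k ≤ n−2 let d_k(T) = 2^{k−n+2}·|δ_k(T)| be the normalized coefficients of the distance characteristic polynomial, where δ_k(T) is the coefficient of x^k in det(𝒟(T) − xI). Then the sequence d_0(T), d_1(T), ..., d_{n−2}(T) is log-concave and unimodal. -/
/-!
The polynomial `det(𝒟 - xI)` is real-rooted, because `𝒟` is symmetric, so Newton's inequality
(`coeff_newton`) gives `δ_{k-1} δ_{k+1} ≤ δ_k²` whenever the left side is nonnegative. The powers of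
two form a geometric sequence and do not affect log-concavity. Since absolute values are taken, it
remains to see that `δ_0, ..., δ_{n-2}` all have the same strict sign; this also yields unimodality,
as a positive log-concave sequence is unimodal.

For the signs, let `L` be the Laplacian of the tree. Each vertex `i ≠ j` has exactly one neighbour
closer to `j`, which gives `L 𝒟 x = -2 x` for every `x` with zero sum
(`lapMatrix_mulVec_distMatrix`). As `L` is positive semidefinite, `𝒟` is negative definite on the
zero-sum hyperplane (`distMatrix_neg_of_sum_zero`), so all eigenvalues but one are negative. The
trace of `𝒟` is zero, so the remaining eigenvalue is `S = ∑ μᵢ`, where `-μᵢ < 0` are the other ones.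
Writing `q = ∏ (X + μᵢ)`, the `k`-th coefficient of `(X - S) q` is `q_{k-1} - S q_k`, which is
negative for `k ≤ n - 2` (`coeff_prod_X_add_C`, `charpoly_coeff_neg`).
-/

/-- A finite sequence `a 0, a 1, ..., a n` is log-concave if
`(a j)^2 ≥ a (j-1) * a (j+1)` for all `j = 1, ..., n-1`. -/
def SeqLogConcave (a : ℕ → ℝ) (n : ℕ) : Prop :=
  ∀ j, 1 ≤ j → j + 1 ≤ n → a (j - 1) * a (j + 1) ≤ (a j) ^ 2

/-- A finite sequence `a 0, a 1, ..., a n` is unimodal if there is an index `k`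
such that `a (i-1) ≤ a i` for all `i ≤ k` and `a i ≥ a (i+1)` for all `i ≥ k`. -/
def SeqUnimodal (a : ℕ → ℝ) (n : ℕ) : Prop :=
  ∃ k, (∀ i, 1 ≤ i → i ≤ k → i ≤ n → a (i - 1) ≤ a i) ∧
    (∀ i, k ≤ i → i + 1 ≤ n → a (i + 1) ≤ a i)

/-- The distance matrix of a graph `G`: the `(i,j)` entry is the graph
distance between `i` and `j`. -/
noncomputable def distMatrix {n : ℕ} (G : SimpleGraph (Fin n)) :
    Matrix (Fin n) (Fin n) ℝ :=
  fun i j => (G.dist i j : ℝ)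

/-- The polynomial `det(𝒟(G) - xI)`, whose coefficient of `x^k` is `δ_k(G)`. -/
noncomputable def deltaPoly {n : ℕ} (G : SimpleGraph (Fin n)) : Polynomial ℝ :=
  ((distMatrix G).map Polynomial.C
    - (Polynomial.X : Polynomial ℝ) • (1 : Matrix (Fin n) (Fin n) (Polynomial ℝ))).det

/-- The normalized coefficients `d_k(G) = 2^{k-n+2} |δ_k(G)|`. -/
noncomputable def normCoeff {n : ℕ} (G : SimpleGraph (Fin n)) (k : ℕ) : ℝ :=
  ((2 : ℝ) ^ k / (2 : ℝ) ^ (n - 2)) * |(deltaPoly G).coeff k|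

/-! ### Newton's inequality for real-rooted polynomials -/

open Polynomial in
/-- By Rolle's theorem, the derivative of a real-rooted polynomial is real-rooted. -/
lemma splits_derivative_real {p : ℝ[X]} (hp : p.Splits) : (derivative p).Splits := by
  rw [splits_iff_card_roots] at hp ⊢
  have h1 := card_roots_le_derivative p
  have h2 := card_roots' (derivative p)
  have h3 := natDegree_derivative_le p
  by_cases h0 : p.natDegree = 0
  · rw [natDegree_eq_zero] at h0
    obtain ⟨c, rfl⟩ := h0
    simp
  · omega

open Polynomial in
/-- The inequality `p'(0)² ≥ p(0) p''(0)` for a real-rooted polynomial. Passing from `q` to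
`(X - a) q` changes the defect `q₁² - 2 q₀ q₂` into `q₀² + a² (q₁² - 2 q₀ q₂)`. -/
lemma coeff_newton_zero {p : ℝ[X]} (hp : p.Splits) :
    2 * (p.coeff 0 * p.coeff 2) ≤ p.coeff 1 ^ 2 := by
  have key : ∀ s : Multiset ℝ,
      2 * ((s.map (X - C ·)).prod.coeff 0 * (s.map (X - C ·)).prod.coeff 2)
        ≤ (s.map (X - C ·)).prod.coeff 1 ^ 2 := by
    intro s
    induction s using Multiset.induction with
    | empty => simp [coeff_one]
    | cons a s ih =>
      simp only [Multiset.map_cons, Multiset.prod_cons]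
      set q := (s.map (X - C ·)).prod
      simp only [sub_mul, coeff_sub, coeff_C_mul, coeff_X_mul, mul_coeff_zero, coeff_X_zero,
        zero_mul]
      rw [coeff_C_zero]
      nlinarith [mul_nonneg (sq_nonneg a) (sub_nonneg.2 ih), sq_nonneg (q.coeff 0)]
  have h := key p.roots
  rw [hp.eq_prod_roots]
  simp only [coeff_C_mul]
  nlinarith [mul_nonneg (sq_nonneg p.leadingCoeff) (sub_nonneg.2 h)]

open Polynomial in
/-- A form of Newton's inequality, obtained by applying `coeff_newton_zero` to the `k`-th
derivative. The constants `k + 2` and `k + 1` are what makes the induction close. -/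
lemma coeff_newton {p : ℝ[X]} (hp : p.Splits) (k : ℕ) :
    (k + 2) * (p.coeff k * p.coeff (k + 2)) ≤ (k + 1) * p.coeff (k + 1) ^ 2 := by
  induction k generalizing p with
  | zero => simpa using coeff_newton_zero hp
  | succ k ih =>
    have h := ih (splits_derivative_real hp)
    simp only [coeff_derivative] at h
    push_cast at h ⊢
    have hk : (0 : ℝ) < (k + 1) * (k + 2) := by positivity
    rw [show k + 1 + 2 = k + 2 + 1 by ring]
    refine le_of_mul_le_mul_left ?_ hk
    nlinarith [h]

lemma coeff_logConcave {p : Polynomial ℝ} (hp : p.Splits) (k : ℕ)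
    (h : 0 ≤ p.coeff k * p.coeff (k + 2)) :
    p.coeff k * p.coeff (k + 2) ≤ p.coeff (k + 1) ^ 2 := by
  have hk : (0 : ℝ) < k + 1 := by positivity
  refine le_of_mul_le_mul_left ?_ hk
  linarith [coeff_newton hp k]

/-! ### Coefficient bounds and unimodality -/

open Polynomial in
/-- Let `q = ∏ (X + μᵢ)` with all `μᵢ > 0`, and let `S = ∑ μᵢ`. The coefficients of `q` up to its
degree are positive and satisfy `q_k ≤ S q_{k+1}`, strictly unless `k + 1` is the degree. The
strict bound for a product follows from the non-strict bound with one factor removed. -/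
lemma coeff_prod_X_add_C {ι : Type*} (s : Finset ι) (μ : ι → ℝ) (hμ : ∀ i ∈ s, 0 < μ i) :
    (∀ k, 0 ≤ (∏ i ∈ s, (X + C (μ i))).coeff k) ∧
    (∀ k ≤ s.card, 0 < (∏ i ∈ s, (X + C (μ i))).coeff k) ∧
    (∀ k < s.card, (∏ i ∈ s, (X + C (μ i))).coeff k
      ≤ (∑ i ∈ s, μ i) * (∏ i ∈ s, (X + C (μ i))).coeff (k + 1)) ∧
    (∀ k, k + 1 < s.card → (∏ i ∈ s, (X + C (μ i))).coeff k
      < (∑ i ∈ s, μ i) * (∏ i ∈ s, (X + C (μ i))).coeff (k + 1)) := by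
  classical
  induction s using Finset.induction_on with
  | empty => simp [coeff_one]; intro k; split_ifs <;> simp
  | insert a s ha ih =>
    obtain ⟨h0, h1, h2, -⟩ := ih fun i hi => hμ i (Finset.mem_insert_of_mem hi)
    have hS : 0 ≤ ∑ i ∈ s, μ i :=
      Finset.sum_nonneg fun i hi => (hμ i (Finset.mem_insert_of_mem hi)).le
    have hpa := hμ a (Finset.mem_insert_self a s)
    rw [Finset.prod_insert ha, Finset.sum_insert ha, Finset.card_insert_of_notMem ha]
    set q := ∏ i ∈ s, (X + C (μ i))
    set S := ∑ i ∈ s, μ i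
    set b := μ a
    have c0 : ((X + C b) * q).coeff 0 = b * q.coeff 0 := by simp [add_mul]
    have cs : ∀ k, ((X + C b) * q).coeff (k + 1) = q.coeff k + b * q.coeff (k + 1) := by
      intro k; simp [add_mul]
    have key : ∀ k ≤ s.card, ((X + C b) * q).coeff k ≤ (b + S) * q.coeff k := by
      intro k hk
      cases k with
      | zero => rw [c0]; nlinarith [mul_nonneg hS (h0 0)]
      | succ k => rw [cs]; linarith [h2 k (by omega)]
    refine ⟨?_, ?_, ?_, ?_⟩
    · rintro (_ | k)
      · rw [c0]; exact mul_nonneg hpa.le (h0 0)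
      · rw [cs]; exact add_nonneg (h0 k) (mul_nonneg hpa.le (h0 _))
    · rintro (_ | k) hk
      · rw [c0]; exact mul_pos hpa (h1 0 (Nat.zero_le _))
      · rw [cs]; exact add_pos_of_pos_of_nonneg (h1 k (by omega)) (mul_nonneg hpa.le (h0 _))
    · intro k hk
      rw [cs]
      have := mul_nonneg (add_nonneg hpa.le hS) (mul_nonneg hpa.le (h0 (k + 1)))
      linarith [key k (by omega)]
    · intro k hk
      rw [cs]
      have := mul_pos (add_pos_of_pos_of_nonneg hpa hS) (mul_pos hpa (h1 (k + 1) (by omega)))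
      linarith [key k (by omega)]

/-- A positive log-concave sequence is unimodal: once it has stopped increasing it never increases
again, so the first strict descent is a mode. -/
lemma SeqLogConcave.unimodal {a : ℕ → ℝ} {m : ℕ} (hpos : ∀ k ≤ m, 0 < a k)
    (h : SeqLogConcave a m) : SeqUnimodal a m := by
  classical
  have step : ∀ i, i + 2 ≤ m → a (i + 1) ≤ a i → a (i + 2) ≤ a (i + 1) := by
    intro i hi hle
    have hl := h (i + 1) (by omega) (by omega)
    simp only [Nat.add_sub_cancel] at hl
    have p0 := hpos i (by omega)
    have p1 := hpos (i + 1) (by omega)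
    have p2 := hpos (i + 2) (by omega)
    by_contra hc
    push Not at hc
    nlinarith [mul_lt_mul_of_pos_left hc p1, mul_le_mul_of_nonneg_right hle p2.le]
  by_cases hex : ∃ k, k + 1 ≤ m ∧ a (k + 1) < a k
  · refine ⟨Nat.find hex, ?_, ?_⟩
    · intro i hi hik him
      have := Nat.find_min hex (m := i - 1) (by omega)
      rw [Nat.sub_add_cancel hi] at this
      push Not at this
      exact this him
    · intro i hi
      induction i, hi using Nat.le_induction with
      | base => intro _; exact (Nat.find_spec hex).2.le
      | succ i hi ih => intro him; exact step i him (ih (by omega))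
  · push Not at hex
    refine ⟨m, ?_, fun i hi hi' => by omega⟩
    intro i hi _ him
    have := hex (i - 1) (by omega)
    rwa [Nat.sub_add_cancel hi] at this

/-! ### The distance matrix of a tree and its Laplacian -/

open SimpleGraph in
/-- In a tree, exactly one neighbour of `i` is closer to `j ≠ i` than `i` is, namely the next vertex
on the unique path; every other neighbour is one step farther away. -/
lemma tree_exists_unique_closer {V : Type*} [DecidableEq V] {G : SimpleGraph V} (hG : G.IsTree) {i j : V}
    (hij : i ≠ j) : ∃ w, G.Adj i w ∧
      ∀ u, G.Adj i u → (G.dist i j : ℝ) - G.dist u j = if u = w then 1 else -1 := by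
  obtain ⟨p, hp, hlen⟩ := hG.connected.exists_path_of_dist i j
  cases p with
  | nil => exact absurd rfl hij
  | @cons _ w _ hw p =>
    have hwj : G.dist i j = G.dist w j + 1 := by
      have h1 := dist_le p
      have h2 := hG.dist_eq_dist_add_one_of_adj j hw
      rw [Walk.length_cons] at hlen
      rw [dist_comm (u := j), dist_comm (u := j)] at h2
      omega
    refine ⟨w, hw, fun u hu => ?_⟩
    split_ifs with huw
    · subst huw; rw [hwj]; push_cast; ring
    · have h2 := hG.dist_eq_dist_add_one_of_adj j hu
      rw [dist_comm (u := j), dist_comm (u := j)] at h2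
      rcases h2 with h2 | h2
      · exfalso
        obtain ⟨q, hq, hql⟩ := hG.connected.exists_path_of_dist u j
        have hq' : (Walk.cons hu q).IsPath :=
          Walk.isPath_of_length_eq_dist _ (by rw [Walk.length_cons, hql, h2])
        have := (hG.existsUnique_path i j).unique hp hq'
        simp only [Walk.cons.injEq] at this
        exact huw this.1.symm
      · rw [h2]; push_cast; ring

open SimpleGraph in
/-- The `(i, j)` entry of `L 𝒟`, where `L` is the Laplacian of the tree: `L 𝒟 = τ 1ᵀ - 2 I` with
`τ i = 2 - deg i`. -/
lemma tree_sum_neighbor {n : ℕ} {G : SimpleGraph (Fin n)} [DecidableRel G.Adj]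
    (hG : G.IsTree) (i j : Fin n) :
    ∑ u ∈ G.neighborFinset i, ((G.dist i j : ℝ) - G.dist u j)
      = 2 - G.degree i - if i = j then 2 else 0 := by
  split_ifs with hij
  · subst hij
    rw [Finset.sum_congr rfl (g := fun _ => (-1 : ℝ))]
    · simp
    · intro u hu
      rw [mem_neighborFinset] at hu
      rw [dist_eq_one_iff_adj.2 hu.symm]
      simp
  · obtain ⟨w, hw, h⟩ := tree_exists_unique_closer hG hij
    rw [Finset.sum_congr rfl (g := fun u => (if u = w then (2 : ℝ) else 0) - 1)]
    · rw [Finset.sum_sub_distrib, Finset.sum_ite_eq']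
      simp [hw]
    · intro u hu
      rw [mem_neighborFinset] at hu
      rw [h u hu]
      split_ifs <;> norm_num

open Matrix in
lemma lapMatrix_mulVec_distMatrix {n : ℕ} {G : SimpleGraph (Fin n)} [DecidableRel G.Adj]
    (hG : G.IsTree) {x : Fin n → ℝ} (hx : ∑ j, x j = 0) :
    G.lapMatrix ℝ *ᵥ (distMatrix G *ᵥ x) = (-2 : ℝ) • x := by
  ext i
  rw [SimpleGraph.lapMatrix_mulVec_apply]
  calc _ = ∑ u ∈ G.neighborFinset i, ((distMatrix G *ᵥ x) i - (distMatrix G *ᵥ x) u) := by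
        simp
    _ = ∑ j, (∑ u ∈ G.neighborFinset i, ((G.dist i j : ℝ) - G.dist u j)) * x j := by
        simp only [mulVec, dotProduct, distMatrix, ← Finset.sum_sub_distrib, Finset.sum_mul,
          ← sub_mul]
        exact Finset.sum_comm
    _ = ∑ j, ((2 - G.degree i : ℝ) * x j - if i = j then 2 * x j else 0) := by
        refine Finset.sum_congr rfl fun j _ => ?_
        rw [tree_sum_neighbor hG]
        split_ifs <;> ring
    _ = _ := by
        rw [Finset.sum_sub_distrib, ← Finset.mul_sum, hx, Finset.sum_ite_eq]
        simp

open Matrix in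
/-- The distance matrix of a tree is negative definite on vectors with zero sum. With `y = 𝒟 x` one
has `L y = -2 x`, hence `xᵀ 𝒟 x = -½ yᵀ L y ≤ 0`, and equality forces `L y = 0`, that is
`x = 0`. -/
lemma distMatrix_neg_of_sum_zero {n : ℕ} {G : SimpleGraph (Fin n)} (hG : G.IsTree)
    {x : Fin n → ℝ} (hx : ∑ j, x j = 0) (hx0 : x ≠ 0) :
    x ⬝ᵥ (distMatrix G *ᵥ x) < 0 := by
  classical
  set y := distMatrix G *ᵥ x
  have hL : G.lapMatrix ℝ *ᵥ y = (-2 : ℝ) • x := lapMatrix_mulVec_distMatrix hG hx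
  have hps := SimpleGraph.posSemidef_lapMatrix ℝ G
  have hnn := hps.dotProduct_mulVec_nonneg y
  have hne : star y ⬝ᵥ (G.lapMatrix ℝ *ᵥ y) ≠ 0 := by
    rw [Ne, hps.dotProduct_mulVec_zero_iff, hL]
    simpa using hx0
  have hpos := lt_of_le_of_ne hnn hne.symm
  rw [hL, star_trivial, dotProduct_smul, smul_eq_mul, dotProduct_comm] at hpos
  linarith

/-! ### Eigenvalues and signs of the coefficients -/

lemma distMatrix_isHermitian {n : ℕ} (G : SimpleGraph (Fin n)) :
    (distMatrix G).IsHermitian := by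
  ext i j
  simp [distMatrix, SimpleGraph.dist_comm]

open Matrix in
/-- The distance matrix of a tree has at most one nonnegative eigenvalue: the span of two
orthonormal eigenvectors contains a nonzero vector with zero sum. -/
lemma eigenvalues_neg_of_ne {n : ℕ} {G : SimpleGraph (Fin n)} (hG : G.IsTree) {i j : Fin n}
    (hij : i ≠ j) (hi : 0 ≤ (distMatrix_isHermitian G).eigenvalues i) :
    (distMatrix_isHermitian G).eigenvalues j < 0 := by
  set hA := distMatrix_isHermitian G
  by_contra! hj
  have orth : ∀ k l, (hA.eigenvectorBasis k : Fin n → ℝ) ⬝ᵥ (hA.eigenvectorBasis l : Fin n → ℝ)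
      = if k = l then 1 else 0 := by
    intro k l
    have := orthonormal_iff_ite.1 hA.eigenvectorBasis.orthonormal l k
    simp only [EuclideanSpace.inner_eq_star_dotProduct, star_trivial] at this
    rw [this]
    simp [eq_comm]
  set v : Fin n → ℝ := ⇑(hA.eigenvectorBasis i) with hv
  set w : Fin n → ℝ := ⇑(hA.eigenvectorBasis j) with hw
  have hvv : v ⬝ᵥ v = 1 := by simpa using orth i i
  have hww : w ⬝ᵥ w = 1 := by simpa using orth j j
  have hvw : v ⬝ᵥ w = 0 := by simpa [hij] using orth i j
  have hwv : w ⬝ᵥ v = 0 := by simpa [hij.symm] using orth j i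
  have hAv : distMatrix G *ᵥ v = hA.eigenvalues i • v := hA.mulVec_eigenvectorBasis i
  have hAw : distMatrix G *ᵥ w = hA.eigenvalues j • w := hA.mulVec_eigenvectorBasis j
  -- a nontrivial combination of the two eigenvectors whose entries sum to zero
  obtain ⟨a, b, hab, hsum⟩ : ∃ a b : ℝ, (a ≠ 0 ∨ b ≠ 0) ∧ a * ∑ k, v k + b * ∑ k, w k = 0 := by
    by_cases h : ∑ k, v k = 0
    · exact ⟨1, 0, by simp, by simp [h]⟩
    · exact ⟨-∑ k, w k, ∑ k, v k, Or.inr h, by ring⟩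
  have hq : ∀ c d : ℝ, (a • v + b • w) ⬝ᵥ (c • v + d • w) = a * c + b * d := by
    intro c d
    simp only [add_dotProduct, dotProduct_add, smul_dotProduct, dotProduct_smul, hvv, hww, hvw,
      hwv, smul_eq_mul]
    ring
  have hx0 : a • v + b • w ≠ 0 := by
    intro h0
    have := hq a b
    rw [h0, zero_dotProduct] at this
    rcases hab with h | h <;> nlinarith [mul_self_pos.2 h, mul_self_nonneg a, mul_self_nonneg b]
  have hneg := distMatrix_neg_of_sum_zero hG (x := a • v + b • w)
    (by simpa [Finset.sum_add_distrib, ← Finset.mul_sum] using hsum) hx0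
  rw [mulVec_add, mulVec_smul, mulVec_smul, hAv, hAw, smul_smul, smul_smul, hq] at hneg
  nlinarith [mul_nonneg (mul_self_nonneg a) hi, mul_nonneg (mul_self_nonneg b) hj]

open Polynomial in
lemma deltaPoly_eq {n : ℕ} (G : SimpleGraph (Fin n)) :
    deltaPoly G = C ((-1) ^ n) * (distMatrix G).charpoly := by
  rw [deltaPoly, Matrix.charpoly, ← neg_sub, Matrix.det_neg, Fintype.card_fin]
  congr 1
  · simp
  · congr 1
    ext i j
    simp [Matrix.charmatrix, Matrix.smul_one_eq_diagonal]

open Polynomial in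
/-- Since the trace vanishes, the characteristic polynomial is `(X - S) ∏ (X + μᵢ)` with `μᵢ > 0` and
`S = ∑ μᵢ`; its `k`-th coefficient `q_{k-1} - S q_k` is negative for `k ≤ n - 2`. -/
lemma charpoly_coeff_neg {n : ℕ} (hn : 3 ≤ n) {G : SimpleGraph (Fin n)} (hG : G.IsTree)
    {k : ℕ} (hk : k ≤ n - 2) : (distMatrix G).charpoly.coeff k < 0 := by
  set hA := distMatrix_isHermitian G with hAdef
  have htr : ∑ i, hA.eigenvalues i = 0 := by
    have := hA.trace_eq_sum_eigenvalues
    simpa [Matrix.trace, distMatrix] using this.symm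
  obtain ⟨i₀, hi₀⟩ : ∃ i, 0 ≤ hA.eigenvalues i := by
    by_contra! hc
    have : ∑ i, hA.eigenvalues i < 0 :=
      Finset.sum_neg (fun i _ => hc i) ⟨⟨0, by omega⟩, Finset.mem_univ _⟩
    linarith
  have hs : ∀ i ∈ Finset.univ.erase i₀, 0 < -hA.eigenvalues i := fun i hi =>
    neg_pos.2 (eigenvalues_neg_of_ne hG (Finset.ne_of_mem_erase hi).symm hi₀)
  have hcard : (Finset.univ.erase i₀ : Finset (Fin n)).card = n - 1 := by simp
  obtain ⟨h0, h1, -, h3⟩ := coeff_prod_X_add_C _ (fun i => -hA.eigenvalues i) hs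
  have hlam : ∑ i ∈ Finset.univ.erase i₀, -hA.eigenvalues i = hA.eigenvalues i₀ := by
    rw [← Finset.add_sum_erase _ _ (Finset.mem_univ i₀)] at htr
    rw [Finset.sum_neg_distrib]
    linarith
  have hchar : (distMatrix G).charpoly
      = (X - C (hA.eigenvalues i₀)) * ∏ i ∈ Finset.univ.erase i₀, (X + C (-hA.eigenvalues i)) := by
    rw [hA.charpoly_eq, ← Finset.mul_prod_erase _ _ (Finset.mem_univ i₀)]
    simp [sub_eq_add_neg]
  have hlpos : 0 < hA.eigenvalues i₀ := by
    rw [← hlam]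
    exact Finset.sum_pos hs (Finset.card_pos.1 (by omega))
  rw [hlam] at h3
  rw [hchar]
  set q := ∏ i ∈ Finset.univ.erase i₀, (X + C (-hA.eigenvalues i))
  cases k with
  | zero =>
    have := mul_pos hlpos (h1 0 (by omega))
    simpa [sub_mul] using this
  | succ k =>
    have := h3 k (by omega)
    simpa [sub_mul] using this

/-- For a tree `T` on `n ≥ 3` vertices, the sequence of normalized coefficients
`d_0(T), ..., d_{n-2}(T)` of the distance characteristic polynomial is
log-concave and unimodal. -/
theorem normCoeff_logConcave_unimodal (n : ℕ) (hn : 3 ≤ n)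
    (G : SimpleGraph (Fin n)) (hG : G.IsTree) :
    SeqLogConcave (fun k => normCoeff G k) (n - 2) ∧
    SeqUnimodal (fun k => normCoeff G k) (n - 2) := by
  have hnorm : ∀ k, normCoeff G k
      = (2 : ℝ) ^ k / 2 ^ (n - 2) * |(distMatrix G).charpoly.coeff k| := by
    intro k
    rw [normCoeff, deltaPoly_eq, Polynomial.coeff_C_mul, abs_mul, abs_pow]
    simp
  have hsplit := (distMatrix_isHermitian G).splits_charpoly
  have hneg := fun k (hk : k ≤ n - 2) => charpoly_coeff_neg hn hG hk
  have hlc : SeqLogConcave (fun k => normCoeff G k) (n - 2) := by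
    rintro (_ | j) hj hjn
    · omega
    · simp only [Nat.add_sub_cancel, hnorm]
      have hc := coeff_logConcave hsplit j
        (mul_nonneg_of_nonpos_of_nonpos (hneg j (by omega)).le (hneg (j + 2) hjn).le)
      rw [abs_of_neg (hneg j (by omega)), abs_of_neg (hneg (j + 1 + 1) hjn), mul_pow, sq_abs]
      calc _ = ((2 : ℝ) ^ (j + 1) / 2 ^ (n - 2)) ^ 2 * ((distMatrix G).charpoly.coeff j
              * (distMatrix G).charpoly.coeff (j + 2)) := by ring
        _ ≤ _ := mul_le_mul_of_nonneg_left hc (sq_nonneg _)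
  refine ⟨hlc, hlc.unimodal fun k hk => ?_⟩
  simp only [hnorm]
  have := abs_pos.2 (hneg k hk).ne
  positivity
end

section
/- Let a_0, a_1, ..., a_n be real numbers with a_i > 0 for 0 ≤ i ≤ n−2, such that the sequence a_0, ..., a_{n−2} is unimodal and the polynomial Σ_{k=0}^{n} a_k x^k is real-rooted of degree n. If j is an index with 0 ≤ j ≤ n−2 such that ((n−j)/(n(j+1)))·(a_1/a_0) < 1, then every index m with 0 ≤ m ≤ n−2 at which the sequence a_0, ..., a_{n−2} attains its maximum satisfies m ≤ j. -/
/-!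
A real-rooted polynomial `∑ a_k x^k` of degree `n` satisfies Newton's inequalities
`(n-k)(k+2) a_k a_{k+2} ≤ (n-k-1)(k+1) a_{k+1}^2`. They are obtained here from the Laguerre-type
inequality `2 d q_0 q_2 ≤ (d-1) q_1^2` for the lowest coefficients of a split polynomial `q` of
degree `d` (`laguerre`, by induction on the roots), applied to the `k`-th derivative, which is again
split by Rolle's theorem (`splits_iterate_derivative`).

In terms of `b_k = a_k / C(n,k)`, Newton's inequalities say that `b_{k+1} / b_k` decreases as long
as the terms are positive, so `b_{j+1} / b_j ≤ b_1 / b_0`, that is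
`a_{j+1} / a_j ≤ (n-j)/(n(j+1)) · a_1/a_0` (`ratio_bound`). The hypothesis on `j` therefore gives
`a_{j+1} < a_j`, and by unimodality no maximum occurs after `j`.
-/

/-- A real polynomial is real-rooted if all of its complex roots are real. -/
def RealRooted (p : Polynomial ℝ) : Prop :=
  ∀ z : ℂ, Polynomial.aeval z p = 0 → z.im = 0

open Polynomial

theorem RealRooted.splits {p : ℝ[X]} (hp : RealRooted p) : p.Splits := by
  refine Splits.of_splits_map (algebraMap ℝ ℂ) (IsAlgClosed.splits _) fun z hz => ?_
  have hz0 : aeval z p = 0 := by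
    have h := isRoot_of_mem_roots hz
    rwa [IsRoot, eval_map_algebraMap] at h
  exact ⟨z.re, Complex.ext (by simp) (by simp [hp z hz0])⟩

/-- Laguerre's inequality at `0`, for a product of linear factors. -/
theorem laguerre_multiset (s : Multiset ℝ) :
    2 * (s.card : ℝ) * (s.map fun r => X - C r).prod.coeff 0 *
        (s.map fun r => X - C r).prod.coeff 2 ≤
      ((s.card : ℝ) - 1) * (s.map fun r => X - C r).prod.coeff 1 ^ 2 := by
  induction s using Multiset.induction_on with
  | empty => simp [coeff_one]
  | cons r s ih =>
    simp only [Multiset.map_cons, Multiset.prod_cons, Multiset.card_cons]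
    rcases Nat.eq_zero_or_pos s.card with h0 | hpos
    · rw [Multiset.card_eq_zero] at h0
      subst h0
      simp [coeff_X, coeff_C]
    · set g := (s.map fun r => X - C r).prod with hg
      have c0 : ((X - C r) * g).coeff 0 = -r * g.coeff 0 := by
        simp [sub_mul, mul_coeff_zero]
      have c1 : ((X - C r) * g).coeff 1 = g.coeff 0 - r * g.coeff 1 := by
        simp [sub_mul, coeff_X_mul g 0]
      have c2 : ((X - C r) * g).coeff 2 = g.coeff 1 - r * g.coeff 2 := by
        simp [sub_mul, coeff_X_mul g 1]
      rw [c0, c1, c2]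
      have he : (0 : ℝ) < s.card := by exact_mod_cast hpos
      push_cast
      generalize (s.card : ℝ) = e at *
      generalize g.coeff 0 = u at *
      generalize g.coeff 1 = v at *
      generalize g.coeff 2 = w at *
      -- `e` times the difference of the two sides is at least `(e u + r v)^2`.
      refine le_of_mul_le_mul_left ?_ he
      have h1 : (e + 1) * r ^ 2 * (2 * e * u * w) ≤ (e + 1) * r ^ 2 * ((e - 1) * v ^ 2) :=
        mul_le_mul_of_nonneg_left ih (by positivity)
      nlinarith [sq_nonneg (e * u + r * v)]

theorem laguerre {q : ℝ[X]} (hq : q.Splits) :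
    2 * (q.natDegree : ℝ) * q.coeff 0 * q.coeff 2 ≤
      ((q.natDegree : ℝ) - 1) * q.coeff 1 ^ 2 := by
  have h := laguerre_multiset q.roots
  rw [← hq.natDegree_eq_card_roots] at h
  have hc : ∀ i, q.coeff i = q.leadingCoeff * (q.roots.map fun r => X - C r).prod.coeff i := by
    intro i
    conv_lhs => rw [hq.eq_prod_roots]
    rw [coeff_C_mul]
  rw [hc 0, hc 1, hc 2]
  nlinarith [mul_le_mul_of_nonneg_left h (sq_nonneg q.leadingCoeff)]

theorem splits_iterate_derivative {p : ℝ[X]} (hp : p.Splits) (k : ℕ) :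
    (derivative^[k] p).Splits := by
  induction k with
  | zero => exact hp
  | succ k ih =>
    rw [Function.iterate_succ_apply']
    generalize derivative^[k] p = q at ih
    rw [splits_iff_card_roots]
    have h1 := card_roots_le_derivative q
    have h2 := card_roots' (derivative q)
    rw [← ih.natDegree_eq_card_roots] at h1
    rw [natDegree_derivative] at h2 ⊢
    omega

/-- Newton's inequality between consecutive coefficients, with denominators cleared. -/
theorem newton {p : ℝ[X]} (hp : p.Splits) {k : ℕ} (hk : k ≤ p.natDegree) :
    ((p.natDegree : ℝ) - k) * (k + 2) * p.coeff k * p.coeff (k + 2) ≤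
      ((p.natDegree : ℝ) - k - 1) * (k + 1) * p.coeff (k + 1) ^ 2 := by
  have h := laguerre (splits_iterate_derivative hp k)
  have hdeg : ∀ i, (derivative^[i] p).natDegree = p.natDegree - i := by
    intro i
    induction i with
    | zero => rfl
    | succ i ih => rw [Function.iterate_succ_apply', natDegree_derivative, ih, Nat.sub_sub]
  rw [hdeg k, Nat.cast_sub hk] at h
  simp only [coeff_iterate_derivative, nsmul_eq_mul] at h
  have d0 : (((0 + k).descFactorial k : ℕ) : ℝ) = (k.factorial : ℝ) := by
    simp [Nat.descFactorial_self]
  have d1 : (((1 + k).descFactorial k : ℕ) : ℝ) = (k + 1) * (k.factorial : ℝ) := by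
    have := Nat.factorial_mul_descFactorial (show k ≤ 1 + k by omega)
    rw [Nat.add_sub_cancel, add_comm 1 k, Nat.factorial_one, one_mul, Nat.factorial_succ] at this
    rw [add_comm 1 k]
    exact_mod_cast this
  have d2 : 2 * (((2 + k).descFactorial k : ℕ) : ℝ) = (k + 2) * ((k + 1) * (k.factorial : ℝ)) := by
    have := Nat.factorial_mul_descFactorial (show k ≤ 2 + k by omega)
    rw [Nat.add_sub_cancel, add_comm 2 k, Nat.factorial_two, Nat.factorial_succ (k + 1),
      Nat.factorial_succ k] at this
    rw [add_comm 2 k]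
    exact_mod_cast this
  rw [d0, d1, zero_add, add_comm 1 k] at h
  have hf : (0 : ℝ) < (k.factorial : ℝ) ^ 2 * (k + 1) := by positivity
  refine le_of_mul_le_mul_left ?_ hf
  rw [add_comm 2 k] at h d2
  calc _ = ((p.natDegree : ℝ) - k) * ((k.factorial : ℝ) * p.coeff k) *
          ((k + 2) * ((k + 1) * (k.factorial : ℝ)) * p.coeff (k + 2)) := by ring
    _ = 2 * ((p.natDegree : ℝ) - k) * ((k.factorial : ℝ) * p.coeff k) *
          ((((k + 2).descFactorial k : ℕ) : ℝ) * p.coeff (k + 2)) := by rw [← d2]; ring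
    _ ≤ _ := h
    _ = _ := by ring

/-- The comparison `b_{i+1} / b_i ≤ b_1 / b_0` for `b_k = a_k / C(n,k)`, with denominators
cleared. -/
theorem ratio_bound {n : ℕ} {a : ℕ → ℝ} (hpos : ∀ i ≤ n - 2, 0 < a i)
    (hnewton : ∀ k, k + 2 ≤ n → ((n : ℝ) - k) * (k + 2) * a k * a (k + 2) ≤
      ((n : ℝ) - k - 1) * (k + 1) * a (k + 1) ^ 2)
    (i : ℕ) (hi : i + 1 ≤ n - 2) :
    (i + 1) * n * a 0 * a (i + 1) ≤ (n - i) * a 1 * a i := by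
  induction i with
  | zero => simp; nlinarith
  | succ i ih =>
    have ih := ih (by omega)
    have hN := hnewton i (by omega)
    have h0 := hpos 0 (by omega)
    have hai := hpos i (by omega)
    have hai1 := hpos (i + 1) (by omega)
    have hni : (0 : ℝ) < (n : ℝ) - i - 1 := by
      have : ((i + 1 + 1 : ℕ) : ℝ) ≤ n := by exact_mod_cast (by omega : i + 1 + 1 ≤ n)
      push_cast at this
      linarith
    have hfac : 0 < ((n : ℝ) - i) * a i := mul_pos (by linarith) hai
    refine le_of_mul_le_mul_left ?_ hfac
    push_cast
    calc _ = (n * a 0) * (((n : ℝ) - i) * (i + 2) * a i * a (i + 2)) := by ring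
      _ ≤ (n * a 0) * (((n : ℝ) - i - 1) * (i + 1) * a (i + 1) ^ 2) :=
          mul_le_mul_of_nonneg_left hN (by positivity)
      _ = (((n : ℝ) - i - 1) * a (i + 1)) * ((i + 1) * n * a 0 * a (i + 1)) := by ring
      _ ≤ (((n : ℝ) - i - 1) * a (i + 1)) * ((n - i) * a 1 * a i) :=
          mul_le_mul_of_nonneg_left ih (by positivity)
      _ = _ := by ring

/-- Upper bound on the peak location: if `a 0, ..., a (n-2)` is positive
and unimodal, `∑_{k=0}^n a_k x^k` is real-rooted of degree `n`, and for
some `j ≤ n-2` we have `((n-j)/(n(j+1))) (a 1 / a 0) < 1`, then every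
index `m ≤ n-2` at which the sequence attains its maximum satisfies `m ≤ j`. -/
theorem peak_upper_bound (n : ℕ) (a : ℕ → ℝ)
    (hpos : ∀ i ≤ n - 2, 0 < a i)
    (huni : SeqUnimodal a (n - 2))
    (hdeg : (∑ k ∈ Finset.range (n + 1), Polynomial.C (a k) * Polynomial.X ^ k).degree = (n : WithBot ℕ))
    (hrr : RealRooted (∑ k ∈ Finset.range (n + 1), Polynomial.C (a k) * Polynomial.X ^ k))
    (j : ℕ) (hj : j ≤ n - 2)
    (hcond : (((n : ℝ) - j) / (n * (j + 1))) * (a 1 / a 0) < 1) :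
    ∀ m ≤ n - 2, (∀ i ≤ n - 2, a i ≤ a m) → m ≤ j := by
  intro m hm hmax
  by_contra! hjm
  have hcoeff : ∀ k ≤ n, (∑ k ∈ Finset.range (n + 1), Polynomial.C (a k) *
      Polynomial.X ^ k).coeff k = a k := by
    intro k hk
    simp only [finsetSum_coeff, coeff_C_mul_X_pow]
    rw [Finset.sum_ite_eq, if_pos (Finset.mem_range.2 (by omega))]
  have hnat := natDegree_eq_of_degree_eq_some hdeg
  have hratio := ratio_bound hpos (fun k hk => by
    have h := newton hrr.splits (k := k) (by rw [hnat]; omega)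
    rwa [hnat, hcoeff k (by omega), hcoeff (k + 1) (by omega), hcoeff (k + 2) hk] at h)
    j (by omega)
  have h0 := hpos 0 (by omega)
  have haj := hpos j hj
  have hn : (0 : ℝ) < n := by exact_mod_cast (by omega : 0 < n)
  have hD : (0 : ℝ) < n * (j + 1) * a 0 := by positivity
  have hlt : a (j + 1) < a j := by
    rw [div_mul_div_comm, div_lt_one hD] at hcond
    refine lt_of_mul_lt_mul_left ?_ hD.le
    calc _ = (j + 1) * n * a 0 * a (j + 1) := by ring
      _ ≤ _ := hratio
      _ < _ := mul_lt_mul_of_pos_right hcond haj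
  obtain ⟨k, hup, hdown⟩ := huni
  have hkj : k ≤ j := by
    by_contra! hk
    have := hup (j + 1) (by omega) (by omega) (by omega)
    rw [Nat.add_sub_cancel] at this
    linarith
  have hdesc : ∀ i, j + 1 ≤ i → i ≤ n - 2 → a i ≤ a (j + 1) := by
    intro i hi
    induction i, hi using Nat.le_induction with
    | base => exact fun _ => le_rfl
    | succ i hi ih => exact fun h => (hdown i (by omega) h).trans (ih (by omega))
  linarith [hdesc m hjm hm, hmax j hj]
end
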